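/- If G is a subgroup of PL₊(I) and G admits a bad overlap, then G is not soluble. -/

import Mathlib

open Set

namespace PLPaper

/-- We model `PL₊(I)` inside the group of bijections of `ℝ` with *opposite*
composition, so that the group acts on `ℝ` on the right:
`x · (g * h) = (x · g) · h`. -/
abbrev PermR : Type := (Equiv.Perm ℝ)ᵐᵒᵖ

/-- The (right) action of `g` on the point `x`. -/
def ap (g : PermR) (x : ℝ) : ℝ := g.unop x

/-- `g` is affine on a neighbourhood of `x`. -/
def IsLocallyAffineAt (g : PermR) (x : ℝ) : Prop :=
  ∃ m b : ℝ, ∀ᶠ y in nhds x, ap g y = m * y + b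

/-- The breakpoints of `g`: points of `(0,1)` where `g` is not locally affine
(equivalently, for a PL map, where the derivative fails to exist). -/
def Breakpoints (g : PermR) : Set ℝ :=
  {x ∈ Ioo (0:ℝ) 1 | ¬ IsLocallyAffineAt g x}

/-- `g` is an orientation-preserving piecewise-linear homeomorphism of `[0,1]`
(extended by the identity to all of `ℝ`), with finitely many breakpoints. -/
def IsPL (g : PermR) : Prop :=
  StrictMono (ap g) ∧ (∀ x ∉ Ioo (0:ℝ) 1, ap g x = x) ∧ (Breakpoints g).Finite

/-- The support of `g`. -/
def Supp (g : PermR) : Set ℝ := {x | ap g x ≠ x}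

/-- `(a,b)` is an orbital of `g`, i.e. a connected component of `Supp g`. -/
def IsOrbital (g : PermR) (a b : ℝ) : Prop :=
  a < b ∧ Ioo a b ⊆ Supp g ∧ a ∉ Supp g ∧ b ∉ Supp g

/-- The support of a subgroup `G`. -/
def GSupp (G : Subgroup PermR) : Set ℝ := ⋃ g ∈ (G : Set PermR), Supp g

/-- `(a,b)` is an orbital of the group `G`, i.e. a connected component of its support. -/
def IsGroupOrbital (G : Subgroup PermR) (a b : ℝ) : Prop :=
  a < b ∧ Ioo a b ⊆ GSupp G ∧ a ∉ GSupp G ∧ b ∉ GSupp G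

/-- The pair `g, h` carries a transition chain: orbitals `(a,b)` of `g` and
`(c,d)` of `h` with `a < c < b < d`. -/
def ElemsTransitionChain (g h : PermR) : Prop :=
  ∃ a b c d : ℝ, IsOrbital g a b ∧ IsOrbital h c d ∧ a < c ∧ c < b ∧ b < d

/-- The pair `g, h` carries a one-sided overlap: orbitals `(a,b)` of `g` and
`(a,c)` of `h`, or `(a,b)` of `g` and `(c,b)` of `h`, where `a < c < b`. -/
def ElemsOneSidedOverlap (g h : PermR) : Prop :=
  ∃ a b c : ℝ, a < c ∧ c < b ∧
    ((IsOrbital g a b ∧ IsOrbital h a c) ∨ (IsOrbital g a b ∧ IsOrbital h c b))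

def AdmitsTransitionChain (G : Subgroup PermR) : Prop :=
  ∃ g ∈ G, ∃ h ∈ G, ElemsTransitionChain g h

def AdmitsOneSidedOverlap (G : Subgroup PermR) : Prop :=
  ∃ g ∈ G, ∃ h ∈ G, ElemsOneSidedOverlap g h

/-- `G` admits a bad overlap: orbitals `A` of `f ∈ G` and `B` of `g ∈ G` which
intersect, are distinct, and neither closure is contained in the other orbital. -/
def AdmitsBadOverlap (G : Subgroup PermR) : Prop :=
  ∃ f ∈ G, ∃ g ∈ G, ∃ a b c d : ℝ, IsOrbital f a b ∧ IsOrbital g c d ∧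
    (Ioo a b ∩ Ioo c d).Nonempty ∧ Ioo a b ≠ Ioo c d ∧
    ¬ Icc a b ⊆ Ioo c d ∧ ¬ Icc c d ⊆ Ioo a b

/-- A tower: a set of signed orbitals `((a,b), g)` with pairwise nested orbitals,
where equal orbitals force equal signatures. -/
def IsTower (T : Set ((ℝ × ℝ) × PermR)) : Prop :=
  (∀ p ∈ T, IsOrbital p.2 p.1.1 p.1.2) ∧
  (∀ p ∈ T, ∀ q ∈ T,
      Ioo p.1.1 p.1.2 ⊆ Ioo q.1.1 q.1.2 ∨ Ioo q.1.1 q.1.2 ⊆ Ioo p.1.1 p.1.2) ∧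
  (∀ p ∈ T, ∀ q ∈ T, p.1 = q.1 → p.2 = q.2)

/-- `G` admits the tower `T` if `T` is a tower all of whose signatures lie in `G`. -/
def AdmitsTower (G : Subgroup PermR) (T : Set ((ℝ × ℝ) × PermR)) : Prop :=
  IsTower T ∧ ∀ p ∈ T, p.2 ∈ G

def AdmitsInfiniteTower (G : Subgroup PermR) : Prop :=
  ∃ T : Set ((ℝ × ℝ) × PermR), AdmitsTower G T ∧ T.Infinite

/-- The set of breakpoints of the elements of a set `S`. -/
def BreakSet (S : Set PermR) : Set ℝ := ⋃ g ∈ S, Breakpoints g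

/-- The derived length of a group: the least `n` with `derivedSeries G n = ⊥`. -/
noncomputable def derivedLength (G : Type*) [Group G] : ℕ :=
  sInf {n : ℕ | derivedSeries G n = ⊥}

open scoped commutatorElement

theorem ap_mul (g h : PermR) (x : ℝ) : ap (g * h) x = ap h (ap g x) := rfl

theorem ap_one (x : ℝ) : ap 1 x = x := rfl

theorem ap_inv_ap (g : PermR) (x : ℝ) : ap g⁻¹ (ap g x) = x := by
  rw [← ap_mul, mul_inv_cancel, ap_one]

theorem ap_ap_inv (g : PermR) (x : ℝ) : ap g (ap g⁻¹ x) = x := by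
  rw [← ap_mul, inv_mul_cancel, ap_one]

theorem ap_inv_fix {g : PermR} {x : ℝ} (h : ap g x = x) : ap g⁻¹ x = x := by
  conv_lhs => rw [← h]
  exact ap_inv_ap g x

theorem fix_closure (S : Set PermR) (x : ℝ) (h : ∀ g ∈ S, ap g x = x) :
    ∀ k ∈ Subgroup.closure S, ap k x = x := by
  intro k hk
  induction hk using Subgroup.closure_induction with
  | mem g hg => exact h g hg
  | one => rfl
  | mul a b _ _ ha hb => rw [ap_mul, ha, hb]
  | inv a _ ha => exact ap_inv_fix ha

theorem ap_inj (g : PermR) {x y : ℝ} (h : ap g x = ap g y) : x = y := by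
  rw [← ap_inv_ap g x, h, ap_inv_ap]

theorem strictMono_inv {g : PermR} (hg : StrictMono (ap g)) : StrictMono (ap g⁻¹) := by
  intro x y hxy
  by_contra hc
  have := hg.monotone (not_lt.mp hc)
  rw [ap_ap_inv, ap_ap_inv] at this
  linarith

theorem ap_continuous {g : PermR} (hg : StrictMono (ap g)) : Continuous (ap g) :=
  hg.monotone.continuous_of_surjective (fun y => ⟨ap g⁻¹ y, ap_ap_inv g y⟩)

/-- The supremum of a nonempty bounded set invariant under `g` is fixed by `g`. -/
theorem sup_fixed {g : PermR} (hg : StrictMono (ap g)) {S : Set ℝ} {s : ℝ} (hs : IsLUB S s)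
    (h1 : ∀ x ∈ S, ap g x ∈ S) (h2 : ∀ x ∈ S, ap g⁻¹ x ∈ S) : ap g s = s := by
  apply le_antisymm
  · have : s ≤ ap g⁻¹ s := hs.2 (fun y hy => by
      have h3 := (strictMono_inv hg).monotone (hs.1 (h1 y hy))
      rwa [ap_inv_ap] at h3)
    have h4 := hg.monotone this
    rwa [ap_ap_inv] at h4
  · exact hs.2 (fun y hy => by
      have h3 := hg.monotone (hs.1 (h2 y hy))
      rwa [ap_ap_inv] at h3)

theorem inf_fixed {g : PermR} (hg : StrictMono (ap g)) {S : Set ℝ} {s : ℝ} (hs : IsGLB S s)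
    (h1 : ∀ x ∈ S, ap g x ∈ S) (h2 : ∀ x ∈ S, ap g⁻¹ x ∈ S) : ap g s = s := by
  apply le_antisymm
  · exact hs.2 (fun y hy => by
      have h3 := hg.monotone (hs.1 (h2 y hy))
      rwa [ap_ap_inv] at h3)
  · have : ap g⁻¹ s ≤ s := hs.2 (fun y hy => by
      have h3 := (strictMono_inv hg).monotone (hs.1 (h1 y hy))
      rwa [ap_inv_ap] at h3)
    have h4 := hg.monotone this
    rwa [ap_ap_inv] at h4

theorem exists_lub {S : Set ℝ} (hne : S.Nonempty) {u : ℝ} (hu : ∀ x ∈ S, x ≤ u) :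
    ∃ s, IsLUB S s := ⟨_, isLUB_csSup hne ⟨u, hu⟩⟩

theorem exists_glb {S : Set ℝ} (hne : S.Nonempty) {u : ℝ} (hu : ∀ x ∈ S, u ≤ x) :
    ∃ s, IsGLB S s := ⟨_, isGLB_csInf hne ⟨u, hu⟩⟩

theorem orb_fix_left {g : PermR} {a b : ℝ} (h : IsOrbital g a b) : ap g a = a := by
  have := h.2.2.1
  simpa [Supp] using this

theorem orb_fix_right {g : PermR} {a b : ℝ} (h : IsOrbital g a b) : ap g b = b := by
  have := h.2.2.2
  simpa [Supp] using this

theorem orb_move {g : PermR} {a b x : ℝ} (h : IsOrbital g a b) (h1 : a < x) (h2 : x < b) :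
    ap g x ≠ x := h.2.1 ⟨h1, h2⟩

theorem lt_ap {g : PermR} (hg : StrictMono (ap g)) {a x : ℝ} (ha : ap g a = a) (h : a < x) :
    a < ap g x := by
  have := hg h
  rwa [ha] at this

theorem ap_lt {g : PermR} (hg : StrictMono (ap g)) {a x : ℝ} (ha : ap g a = a) (h : x < a) :
    ap g x < a := by
  have := hg h
  rwa [ha] at this

/-- An invariant set meeting an orbital accumulates at its right end. -/
theorem orb_right {g : PermR} (hg : StrictMono (ap g)) {a b q : ℝ} (h : IsOrbital g a b)
    {F : Set ℝ} (h1 : ∀ x ∈ F, ap g x ∈ F) (h2 : ∀ x ∈ F, ap g⁻¹ x ∈ F)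
    (hq : q ∈ F) (haq : a < q) (hqb : q < b) {t : ℝ} (ht : t < b) :
    ∃ x ∈ F, t < x ∧ a < x ∧ x < b := by
  by_contra hc
  push Not at hc
  have hgi := strictMono_inv hg
  have ha := orb_fix_left h
  have hb := orb_fix_right h
  obtain ⟨s, hs⟩ := exists_lub (S := F ∩ Ioo a b) ⟨q, hq, haq, hqb⟩ (u := t) (by
    rintro x ⟨hx, hx1, hx2⟩
    by_contra hlt
    exact absurd hx2 (not_lt.mpr (hc x hx (not_le.mp hlt) hx1)))
  have hsf : ap g s = s := sup_fixed hg hs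
    (fun x hx => ⟨h1 x hx.1, lt_ap hg ha hx.2.1, ap_lt hg hb hx.2.2⟩)
    (fun x hx => ⟨h2 x hx.1, lt_ap hgi (ap_inv_fix ha) hx.2.1, ap_lt hgi (ap_inv_fix hb) hx.2.2⟩)
  have hqs : q ≤ s := hs.1 ⟨hq, haq, hqb⟩
  have hst : s ≤ t := hs.2 (by
    rintro x ⟨hx, hx1, hx2⟩
    by_contra hlt
    exact absurd hx2 (not_lt.mpr (hc x hx (not_le.mp hlt) hx1)))
  exact orb_move h (by linarith) (by linarith) hsf

/-- An invariant set meeting an orbital accumulates at its left end. -/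
theorem orb_left {g : PermR} (hg : StrictMono (ap g)) {a b q : ℝ} (h : IsOrbital g a b)
    {F : Set ℝ} (h1 : ∀ x ∈ F, ap g x ∈ F) (h2 : ∀ x ∈ F, ap g⁻¹ x ∈ F)
    (hq : q ∈ F) (haq : a < q) (hqb : q < b) {t : ℝ} (ht : a < t) :
    ∃ x ∈ F, x < t ∧ a < x ∧ x < b := by
  by_contra hc
  push Not at hc
  have hgi := strictMono_inv hg
  have ha := orb_fix_left h
  have hb := orb_fix_right h
  have hbd : ∀ x ∈ F ∩ Ioo a b, t ≤ x := by
    rintro x ⟨hx, hx1, hx2⟩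
    by_contra hlt
    exact absurd hx2 (not_lt.mpr (hc x hx (not_le.mp hlt) hx1))
  obtain ⟨s, hs⟩ := exists_glb (S := F ∩ Ioo a b) ⟨q, hq, haq, hqb⟩ hbd
  have hsf : ap g s = s := inf_fixed hg hs
    (fun x hx => ⟨h1 x hx.1, lt_ap hg ha hx.2.1, ap_lt hg hb hx.2.2⟩)
    (fun x hx => ⟨h2 x hx.1, lt_ap hgi (ap_inv_fix ha) hx.2.1, ap_lt hgi (ap_inv_fix hb) hx.2.2⟩)
  have hqs : s ≤ q := hs.1 ⟨hq, haq, hqb⟩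
  have hst : t ≤ s := hs.2 hbd
  exact orb_move h (by linarith) (by linarith) hsf

theorem locAff_finite {g : PermR} (hg : IsPL g) : {x | ¬ IsLocallyAffineAt g x}.Finite := by
  apply (hg.2.2.union (Set.toFinite {(0:ℝ), 1})).subset
  intro x hx
  by_cases h01 : x ∈ Ioo (0:ℝ) 1
  · exact Or.inl ⟨h01, hx⟩
  · right
    by_contra hne
    simp only [mem_insert_iff, mem_singleton_iff, not_or] at hne
    apply hx
    refine ⟨1, 0, ?_⟩
    have hmem : x ∈ (Icc (0:ℝ) 1)ᶜ := by
      intro hI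
      exact h01 ⟨lt_of_le_of_ne hI.1 (Ne.symm hne.1), lt_of_le_of_ne hI.2 hne.2⟩
    filter_upwards [isClosed_Icc.isOpen_compl.mem_nhds hmem] with y hy
    rw [hg.2.1 y (fun h => hy (Ioo_subset_Icc_self h))]
    ring

theorem affine_on {g : PermR} {s t : ℝ} (h : ∀ x ∈ Ioo s t, IsLocallyAffineAt g x) :
    ∃ m b : ℝ, ∀ y ∈ Ioo s t, ap g y = m * y + b := by
  have hd : ∀ x ∈ Ioo s t, ∃ m : ℝ, ∀ᶠ y in nhds x, HasDerivAt (ap g) m y := by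
    intro x hx
    obtain ⟨m, b, hmb⟩ := h x hx
    refine ⟨m, ?_⟩
    filter_upwards [hmb.eventually_nhds] with y hy
    have : HasDerivAt (fun y : ℝ => m * y + b) m y := by
      simpa using ((hasDerivAt_id y).const_mul m).add_const b
    exact this.congr_of_eventuallyEq hy
  have hdd : ∀ x ∈ Ioo s t, HasDerivAt (deriv (ap g)) 0 x := by
    intro x hx
    obtain ⟨m, hm⟩ := hd x hx
    exact (hasDerivAt_const x m).congr_of_eventuallyEq (hm.mono fun y hy => hy.deriv)
  obtain ⟨m, hm⟩ := isOpen_Ioo.exists_is_const_of_deriv_eq_zero isPreconnected_Ioo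
    (fun x hx => (hdd x hx).differentiableAt.differentiableWithinAt)
    (fun x hx => (hdd x hx).deriv)
  have hga : ∀ x ∈ Ioo s t, HasDerivAt (fun y => ap g y - m * y) 0 x := by
    intro x hx
    obtain ⟨m', hm'⟩ := hd x hx
    have h1 := hm'.self_of_nhds
    have h2 : m' = m := by rw [← hm x hx, h1.deriv]
    subst h2
    have h3 := h1.sub ((hasDerivAt_id x).const_mul m')
    rw [mul_one, sub_self] at h3
    exact h3
  obtain ⟨b, hb⟩ := isOpen_Ioo.exists_is_const_of_deriv_eq_zero isPreconnected_Ioo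
    (fun x hx => (hga x hx).differentiableAt.differentiableWithinAt)
    (fun x hx => (hga x hx).deriv)
  exact ⟨m, b, fun y hy => by have h4 : ap g y - m * y = b := hb y hy; linarith⟩

open Filter Topology in
theorem germ_right {g : PermR} (hg : IsPL g) {A : ℝ} (hA : ap g A = A) :
    ∃ m : ℝ, ∀ᶠ y in 𝓝[>] A, ap g y = A + m * (y - A) := by
  have h1 : ∀ᶠ y in 𝓝[>] A, IsLocallyAffineAt g y := by
    have := ((locAff_finite hg).subset (sdiff_subset (t := {A}))).isClosed.isOpen_compl.mem_nhds
      (x := A) (by simp)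
    filter_upwards [mem_nhdsWithin_of_mem_nhds this, self_mem_nhdsWithin] with y hy hy2
    by_contra hc
    exact hy ⟨hc, fun h => absurd hy2 (by simp [mem_singleton_iff.mp h])⟩
  obtain ⟨t, ht, hI⟩ := mem_nhdsGT_iff_exists_Ioo_subset.mp h1
  obtain ⟨m, b, hmb⟩ := affine_on (g := g) (s := A) (t := t) (fun x hx => hI hx)
  have hev : ∀ᶠ y in 𝓝[>] A, ap g y = m * y + b := by
    filter_upwards [Ioo_mem_nhdsGT ht] with y hy using hmb y hy
  have hl1 : Tendsto (ap g) (𝓝[>] A) (𝓝 A) := by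
    have := (ap_continuous hg.1).tendsto A
    rw [hA] at this
    exact this.mono_left nhdsWithin_le_nhds
  have hl2 : Tendsto (fun y => m * y + b) (𝓝[>] A) (𝓝 (m * A + b)) :=
    ((by fun_prop : Continuous fun y : ℝ => m * y + b).tendsto A).mono_left nhdsWithin_le_nhds
  have heq := tendsto_nhds_unique hl1 (hl2.congr' (hev.mono fun y hy => hy.symm))
  refine ⟨m, hev.mono fun y hy => ?_⟩
  rw [hy]; linarith

open Filter Topology in
theorem germ_left {g : PermR} (hg : IsPL g) {A : ℝ} (hA : ap g A = A) :
    ∃ m : ℝ, ∀ᶠ y in 𝓝[<] A, ap g y = A + m * (y - A) := by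
  have h1 : ∀ᶠ y in 𝓝[<] A, IsLocallyAffineAt g y := by
    have := ((locAff_finite hg).subset (sdiff_subset (t := {A}))).isClosed.isOpen_compl.mem_nhds
      (x := A) (by simp)
    filter_upwards [mem_nhdsWithin_of_mem_nhds this, self_mem_nhdsWithin] with y hy hy2
    by_contra hc
    exact hy ⟨hc, fun h => absurd hy2 (by simp [mem_singleton_iff.mp h])⟩
  obtain ⟨t, ht, hI⟩ := mem_nhdsLT_iff_exists_Ioo_subset.mp h1
  obtain ⟨m, b, hmb⟩ := affine_on (g := g) (s := t) (t := A) (fun x hx => hI hx)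
  have hev : ∀ᶠ y in 𝓝[<] A, ap g y = m * y + b := by
    filter_upwards [Ioo_mem_nhdsLT ht] with y hy using hmb y hy
  have hl1 : Tendsto (ap g) (𝓝[<] A) (𝓝 A) := by
    have := (ap_continuous hg.1).tendsto A
    rw [hA] at this
    exact this.mono_left nhdsWithin_le_nhds
  have hl2 : Tendsto (fun y => m * y + b) (𝓝[<] A) (𝓝 (m * A + b)) :=
    ((by fun_prop : Continuous fun y : ℝ => m * y + b).tendsto A).mono_left nhdsWithin_le_nhds
  have heq := tendsto_nhds_unique hl1 (hl2.congr' (hev.mono fun y hy => hy.symm))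
  refine ⟨m, hev.mono fun y hy => ?_⟩
  rw [hy]; linarith

/-- Elements that are trivial along the filter `l`. -/
def trivGerm (l : Filter ℝ) : Subgroup PermR where
  carrier := {g | ∀ᶠ y in l, ap g y = y}
  one_mem' := Filter.Eventually.of_forall fun _ => rfl
  mul_mem' := by
    intro a b ha hb
    filter_upwards [ha, hb] with y h1 h2
    rw [ap_mul, h1, h2]
  inv_mem' := by
    intro a ha
    filter_upwards [ha] with y h1
    exact ap_inv_fix h1

open Filter in
theorem comm_le_triv {K : Subgroup PermR} {l : Filter ℝ} {A : ℝ}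
    (hgerm : ∀ g ∈ K, ∃ m : ℝ, ∀ᶠ y in l, ap g y = A + m * (y - A))
    (htend : ∀ g ∈ K, Tendsto (ap g) l l) : ⁅K, K⁆ ≤ trivGerm l := by
  rw [Subgroup.commutator_le]
  intro u hu v hv
  obtain ⟨m, hm⟩ := hgerm u hu
  obtain ⟨n, hn⟩ := hgerm v hv
  change ∀ᶠ y in l, ap ⁅u, v⁆ y = y
  filter_upwards [hm, hn, (htend u hu).eventually hn, (htend v hv).eventually hm] with y h1 h2 h3 h4
  have : ap v (ap u y) = ap u (ap v y) := by
    rw [h3, h4, h1, h2]; ring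
  rw [commutatorElement_def, ap_mul, ap_mul, ap_mul, this, ap_inv_ap, ap_inv_ap]

open Filter Topology in
theorem tend_right {g : PermR} (hg : StrictMono (ap g)) {A : ℝ} (hA : ap g A = A) :
    Tendsto (ap g) (𝓝[>] A) (𝓝[>] A) := by
  apply tendsto_nhdsWithin_of_tendsto_nhds_of_eventually_within
  · have := (ap_continuous hg).tendsto A
    rw [hA] at this
    exact this.mono_left nhdsWithin_le_nhds
  · filter_upwards [self_mem_nhdsWithin] with y hy using lt_ap hg hA hy

open Filter Topology in
theorem tend_left {g : PermR} (hg : StrictMono (ap g)) {A : ℝ} (hA : ap g A = A) :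
    Tendsto (ap g) (𝓝[<] A) (𝓝[<] A) := by
  apply tendsto_nhdsWithin_of_tendsto_nhds_of_eventually_within
  · have := (ap_continuous hg).tendsto A
    rw [hA] at this
    exact this.mono_left nhdsWithin_le_nhds
  · filter_upwards [self_mem_nhdsWithin] with y hy using ap_lt hg hA hy

/-- Iterated commutator subgroups inside `PermR`. -/
def DD (K : Subgroup PermR) : ℕ → Subgroup PermR
  | 0 => K
  | n + 1 => ⁅DD K n, DD K n⁆

theorem comm_le_self (K : Subgroup PermR) : ⁅K, K⁆ ≤ K := by
  rw [Subgroup.commutator_le]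
  intro u hu v hv
  rw [commutatorElement_def]
  exact K.mul_mem (K.mul_mem (K.mul_mem hu hv) (K.inv_mem hu)) (K.inv_mem hv)

theorem DD_le (K : Subgroup PermR) (n : ℕ) : DD K (n + 1) ≤ DD K 1 := by
  induction n with
  | zero => exact le_rfl
  | succ n ih => exact (comm_le_self _).trans ih

theorem DD_le_map (K G : Subgroup PermR) (h : K ≤ G) (n : ℕ) :
    DD K n ≤ (derivedSeries G n).map G.subtype := by
  induction n with
  | zero =>
    intro x hx
    exact ⟨⟨x, h hx⟩, by simp, rfl⟩
  | succ n ih =>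
    rw [derivedSeries_succ, Subgroup.map_commutator]
    exact Subgroup.commutator_mono ih ih

/-- A group without fixed points in `(A,B)` has unbounded orbits there. -/
theorem cofinal {D : Subgroup PermR} (hD : ∀ g ∈ D, StrictMono (ap g)) {A B p q : ℝ}
    (hmove : ∀ x, A < x → x < B → ∃ g ∈ D, ap g x ≠ x)
    (hp : A < p) (hq : q < B) : ∃ k ∈ D, q < ap k p := by
  by_contra hc
  push Not at hc
  have hbd : ∀ x ∈ {x | ∃ k ∈ D, ap k p = x}, x ≤ q := by
    rintro x ⟨k, hk, rfl⟩
    exact hc k hk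
  have hpm : p ∈ {x | ∃ k ∈ D, ap k p = x} := ⟨1, D.one_mem, rfl⟩
  obtain ⟨s, hs⟩ := exists_lub ⟨p, hpm⟩ hbd
  obtain ⟨g, hg, hgs⟩ := hmove s (lt_of_lt_of_le hp (hs.1 hpm)) (lt_of_le_of_lt (hs.2 hbd) hq)
  apply hgs
  apply sup_fixed (hD g hg) hs
  · rintro x ⟨k, hk, rfl⟩
    exact ⟨k * g, D.mul_mem hk hg, rfl⟩
  · rintro x ⟨k, hk, rfl⟩
    exact ⟨k * g⁻¹, D.mul_mem hk (D.inv_mem hg), rfl⟩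

open Filter Topology in
/-- The inductive step: no fixed points pass to the commutator subgroup once germs are trivial. -/
theorem step {D : Subgroup PermR} (hD : ∀ g ∈ D, StrictMono (ap g)) {A B : ℝ} (hAB : A < B)
    (hB : ∀ g ∈ D, ap g B = B)
    (h1 : D ≤ trivGerm (𝓝[>] A)) (h2 : D ≤ trivGerm (𝓝[<] B))
    (hmove : ∀ x, A < x → x < B → ∃ g ∈ D, ap g x ≠ x) :
    ∀ x, A < x → x < B → ∃ g ∈ ⁅D, D⁆, ap g x ≠ x := by
  intro x hAx hxB
  obtain ⟨u, hu, hux⟩ := hmove x hAx hxB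
  have e1 : ∀ᶠ y in 𝓝[>] A, ap u y = y := h1 hu
  have e2 : ∀ᶠ y in 𝓝[<] B, ap u y = y := h2 hu
  obtain ⟨p, hp1, hAp, hpx⟩ := (e1.and (Ioo_mem_nhdsGT hAx)).exists
  obtain ⟨q, hqB, hq⟩ := mem_nhdsLT_iff_exists_Ioo_subset.mp e2
  obtain ⟨k, hk, hkq⟩ := cofinal hD hmove (A := A) (B := B) (p := p) (q := q) (by assumption) hqB
  refine ⟨⁅u, k⁆, Subgroup.commutator_mem_commutator hu hk, ?_⟩
  have hpu : p < ap u x := lt_ap (hD u hu) hp1 (by assumption)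
  have h3 : q < ap k (ap u x) := hkq.trans (hD k hk hpu)
  have h4 : ap k (ap u x) < B :=
    ap_lt (hD k hk) (hB k hk) (ap_lt (hD u hu) (hB u hu) hxB)
  have h5 : ap u (ap k (ap u x)) = ap k (ap u x) := hq ⟨h3, h4⟩
  rw [commutatorElement_def, ap_mul, ap_mul, ap_mul, ap_inv_fix h5, ap_inv_ap]
  exact hux

/-- Core argument: commuting action on `F` is incompatible with a bad overlap. -/
theorem core {f g : PermR} (hf : StrictMono (ap f)) (hg : StrictMono (ap g)) {a b c d : ℝ}
    (hA : IsOrbital f a b) (hB : IsOrbital g c d)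
    (hover : (a ≤ c ∧ c < b ∧ b < d) ∨ (a < c ∧ c < b ∧ b ≤ d))
    {F : Set ℝ}
    (hcl : ∀ x, (∀ t < x, ∃ y ∈ F, t < y ∧ y < x) → x ∈ F)
    (hcl' : ∀ x, (∀ t > x, ∃ y ∈ F, y < t ∧ x < y) → x ∈ F)
    (hf1 : ∀ x ∈ F, ap f x ∈ F) (hf2 : ∀ x ∈ F, ap f⁻¹ x ∈ F)
    (hg1 : ∀ x ∈ F, ap g x ∈ F) (hg2 : ∀ x ∈ F, ap g⁻¹ x ∈ F)
    (hcomm : ∀ x ∈ F, ap f (ap g x) = ap g (ap f x))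
    {q : ℝ} (hq : q ∈ F) (hqm : (a < q ∧ q < b) ∨ (c < q ∧ q < d)) : False := by
  have hfi := strictMono_inv hf
  have hgi := strictMono_inv hg
  have fa := orb_fix_left hA
  have fb := orb_fix_right hA
  have gc := orb_fix_left hB
  have gd := orb_fix_right hB
  rcases hover with ⟨h1, h2, h3⟩ | ⟨h1, h2, h3⟩
  · obtain ⟨q', hq', haq, hqb⟩ : ∃ q' ∈ F, a < q' ∧ q' < b := by
      rcases hqm with h | h
      · exact ⟨q, hq, h⟩
      · obtain ⟨x, hx, h5, h6, h7⟩ := orb_left hg hB hg1 hg2 hq h.1 h.2 h2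
        exact ⟨x, hx, by linarith, h5⟩
    have hbF : b ∈ F := hcl b (fun t ht => by
      obtain ⟨x, hx, h5, h6, h7⟩ := orb_right hf hA hf1 hf2 hq' haq hqb ht
      exact ⟨x, hx, h5, h7⟩)
    rcases lt_or_gt_of_ne (orb_move hB h2 h3) with hlt | hgt
    · apply orb_move hA (x := ap g b) (lt_of_le_of_lt h1 (lt_ap hg gc h2)) hlt
      rw [hcomm b hbF, fb]
    · have hlt : ap g⁻¹ b < b := by
        have := hgi hgt
        rwa [ap_inv_ap] at this
      apply orb_move hA (x := ap g⁻¹ b)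
        (lt_of_le_of_lt h1 (lt_ap hgi (ap_inv_fix gc) h2)) hlt
      apply ap_inj g
      rw [← hcomm _ (hg2 b hbF), ap_ap_inv, fb]
  · obtain ⟨q', hq', haq, hqb⟩ : ∃ q' ∈ F, c < q' ∧ q' < d := by
      rcases hqm with h | h
      · obtain ⟨x, hx, h5, h6, h7⟩ := orb_right hf hA hf1 hf2 hq h.1 h.2 h2
        exact ⟨x, hx, h5, by linarith⟩
      · exact ⟨q, hq, h⟩
    have hcF : c ∈ F := hcl' c (fun t ht => by
      obtain ⟨x, hx, h5, h6, h7⟩ := orb_left hg hB hg1 hg2 hq' haq hqb ht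
      exact ⟨x, hx, h5, h6⟩)
    rcases lt_or_gt_of_ne (orb_move hA h1 h2) with hlt | hgt
    · have hgt : c < ap f⁻¹ c := by
        have := hfi hlt
        rwa [ap_inv_ap] at this
      apply orb_move hB (x := ap f⁻¹ c) hgt
        (lt_of_lt_of_le (ap_lt hfi (ap_inv_fix fb) h2) h3)
      apply ap_inj f
      rw [hcomm _ (hf2 c hcF), ap_ap_inv, gc]
    · apply orb_move hB (x := ap f c) hgt (lt_of_lt_of_le (ap_lt hf fb h2) h3)
      rw [← hcomm c hcF, gc]

open Filter Topology in
theorem main_aux (G : Subgroup PermR) (hPL : ∀ g ∈ G, IsPL g) {f g : PermR} (hfG : f ∈ G)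
    (hgG : g ∈ G) {a b c d : ℝ} (hA : IsOrbital f a b) (hB : IsOrbital g c d)
    (hover : (a ≤ c ∧ c < b ∧ b < d) ∨ (a < c ∧ c < b ∧ b ≤ d)) : ¬ IsSolvable ↥G := by
  intro hsol
  have hf := (hPL f hfG).1
  have hg := (hPL g hgG).1
  have hfi := strictMono_inv hf
  have hgi := strictMono_inv hg
  have fa := orb_fix_left hA
  have gc := orb_fix_left hB
  have fb := orb_fix_right hA
  have gd := orb_fix_right hB
  have hac : a ≤ c := by rcases hover with h | h <;> linarith
  have hcb : c < b := by rcases hover with h | h <;> linarith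
  have hbd : b ≤ d := by rcases hover with h | h <;> linarith
  -- endpoints of the group orbital
  have hfo : ∀ x, x ∉ Ioo (0:ℝ) 1 → ap f x = x ∧ ap g x = x := fun x hx =>
    ⟨(hPL f hfG).2.1 x hx, (hPL g hgG).2.1 x hx⟩
  obtain ⟨A, hAl⟩ := exists_lub (S := {x | x ≤ a ∧ ap f x = x ∧ ap g x = x}) (u := a)
    ⟨min a 0, min_le_left _ _, hfo _ (fun h => absurd h.1 (not_lt.mpr (min_le_right _ _)))⟩
    (fun x hx => hx.1)
  obtain ⟨B, hBl⟩ := exists_glb (S := {x | d ≤ x ∧ ap f x = x ∧ ap g x = x}) (u := d)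
    ⟨max d 1, le_max_left _ _, hfo _ (fun h => absurd h.2 (not_lt.mpr (le_max_right _ _)))⟩
    (fun x hx => hx.1)
  have hAa : A ≤ a := hAl.2 (fun x hx => hx.1)
  have hdB : d ≤ B := hBl.2 (fun x hx => hx.1)
  have hAB : A < B := by linarith
  have self1 : ∀ {h : PermR} {x : ℝ}, ap h x = x → ap h x = x ∧ ap h⁻¹ x = x :=
    fun h => ⟨h, ap_inv_fix h⟩
  have fA : ap f A = A := sup_fixed hf hAl (fun x hx => by rw [hx.2.1]; exact hx)
    (fun x hx => by rw [ap_inv_fix hx.2.1]; exact hx)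
  have gA : ap g A = A := sup_fixed hg hAl (fun x hx => by rw [hx.2.2]; exact hx)
    (fun x hx => by rw [ap_inv_fix hx.2.2]; exact hx)
  have fB : ap f B = B := inf_fixed hf hBl (fun x hx => by rw [hx.2.1]; exact hx)
    (fun x hx => by rw [ap_inv_fix hx.2.1]; exact hx)
  have gB : ap g B = B := inf_fixed hg hBl (fun x hx => by rw [hx.2.2]; exact hx)
    (fun x hx => by rw [ap_inv_fix hx.2.2]; exact hx)
  have hnofix : ∀ x, A < x → x < B → ap f x = x → ap g x = x → False := by
    intro x h1 h2 h3 h4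
    by_cases hxa : x ≤ a
    · exact absurd (hAl.1 ⟨hxa, h3, h4⟩) (not_le.mpr h1)
    · by_cases hxd : d ≤ x
      · exact absurd (hBl.1 ⟨hxd, h3, h4⟩) (not_le.mpr h2)
      · push Not at hxa hxd
        by_cases hxb : x < b
        · exact orb_move hA hxa hxb h3
        · exact orb_move hB (by linarith) hxd h4
  -- the two-generator subgroup
  set K : Subgroup PermR := Subgroup.closure {f, g} with hK
  have hfK : f ∈ K := Subgroup.subset_closure (by simp)
  have hgK : g ∈ K := Subgroup.subset_closure (by simp)
  have hKG : K ≤ G := by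
    rw [hK, Subgroup.closure_le]
    rintro x (rfl | rfl) <;> assumption
  have hKA : ∀ k ∈ K, ap k A = A := fix_closure _ _ (by rintro x (rfl | rfl) <;> assumption)
  have hKB : ∀ k ∈ K, ap k B = B := fix_closure _ _ (by rintro x (rfl | rfl) <;> assumption)
  have hKm : ∀ k ∈ K, StrictMono (ap k) := fun k hk => (hPL k (hKG hk)).1
  have hD1K : ⁅K, K⁆ ≤ K := comm_le_self K
  -- base step
  have hbase : ∀ x, A < x → x < B → ∃ k ∈ ⁅K, K⁆, ap k x ≠ x := by
    intro p hAp hpB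
    by_contra hc
    push Not at hc
    set F : Set ℝ := {x | ∀ k ∈ ⁅K, K⁆, ap k x = x} with hF
    have hinv : ∀ h ∈ K, ∀ x ∈ F, ap h x ∈ F := by
      intro h hh x hx k hk
      have hmem : h * k * h⁻¹ ∈ ⁅K, K⁆ := by
        have : h * k * h⁻¹ = ⁅h, k⁆ * k := by rw [commutatorElement_def]; group
        rw [this]
        exact Subgroup.mul_mem _ (Subgroup.commutator_mem_commutator hh (hD1K hk)) hk
      have h1 := hx _ hmem
      rw [ap_mul, ap_mul] at h1
      conv_rhs => rw [← h1]
      rw [ap_ap_inv]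
    have hcomm : ∀ x ∈ F, ap f (ap g x) = ap g (ap f x) := by
      intro x hx
      have h1 := hx _ (Subgroup.commutator_mem_commutator hfK hgK)
      have h2 : ap (f * g) x = ap (⁅f, g⁆ * (g * f)) x := by
        congr 1
        rw [commutatorElement_def]; group
      rw [ap_mul, ap_mul, ap_mul, h1] at h2
      exact h2.symm
    have hcl : ∀ x, (∀ t < x, ∃ y ∈ F, t < y ∧ y < x) → x ∈ F := by
      intro x hx
      have key : ∀ k ∈ ⁅K, K⁆, x ≤ ap k x := by
        intro k hk
        by_contra hlt
        obtain ⟨y, hy, h1, h2⟩ := hx _ (not_le.mp hlt)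
        have h3 := hKm k (hD1K hk) h2
        rw [hy k hk] at h3
        linarith
      intro k hk
      refine le_antisymm ?_ (key k hk)
      have h1 := (hKm k (hD1K hk)).monotone (key k⁻¹ (Subgroup.inv_mem _ hk))
      rwa [ap_ap_inv] at h1
    have hcl' : ∀ x, (∀ t > x, ∃ y ∈ F, y < t ∧ x < y) → x ∈ F := by
      intro x hx
      have key : ∀ k ∈ ⁅K, K⁆, ap k x ≤ x := by
        intro k hk
        by_contra hlt
        obtain ⟨y, hy, h1, h2⟩ := hx _ (not_le.mp hlt)
        have h3 := hKm k (hD1K hk) h2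
        rw [hy k hk] at h3
        linarith
      intro k hk
      refine le_antisymm (key k hk) ?_
      have h1 := (hKm k (hD1K hk)).monotone (key k⁻¹ (Subgroup.inv_mem _ hk))
      rwa [ap_ap_inv] at h1
    have hf1 := hinv f hfK
    have hf2 := hinv _ (K.inv_mem hfK)
    have hg1 := hinv g hgK
    have hg2 := hinv _ (K.inv_mem hgK)
    have hno : ∀ q ∈ F, ¬ ((a < q ∧ q < b) ∨ (c < q ∧ q < d)) := fun q hq hqm =>
      core hf hg hA hB hover hcl hcl' hf1 hf2 hg1 hg2 hcomm hq hqm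
    have hno' : ∀ q ∈ F, a < q → q < d → False := by
      intro q hq h1 h2
      apply hno q hq
      by_cases h : q < b
      · exact Or.inl ⟨h1, h⟩
      · exact Or.inr ⟨by linarith, h2⟩
    have hpF : p ∈ F := hc
    by_cases hpa : p ≤ a
    · have hbdd : ∀ x ∈ {x | x ∈ F ∧ x ≤ a}, x ≤ a := fun x hx => hx.2
      obtain ⟨s, hs⟩ := exists_lub (S := {x | x ∈ F ∧ x ≤ a}) ⟨p, hpF, hpa⟩ hbdd
      have hps : p ≤ s := hs.1 ⟨hpF, hpa⟩
      have hsa : s ≤ a := hs.2 hbdd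
      have inv : ∀ h ∈ K, StrictMono (ap h) → ∀ t, a ≤ t → t < d → ap h t = t →
          ∀ x ∈ {x | x ∈ F ∧ x ≤ a}, ap h x ∈ {x | x ∈ F ∧ x ≤ a} := by
        rintro h hh hm t h1 h2 h3 x ⟨hx, hxa⟩
        have h4 : ap h x ≤ t := by
          have := hm.monotone (hxa.trans h1)
          rwa [h3] at this
        refine ⟨hinv h hh x hx, ?_⟩
        by_contra hlt
        exact hno' _ (hinv h hh x hx) (not_le.mp hlt) (by linarith)
      refine hnofix s (by linarith) (by linarith) ?_ ?_
      · exact sup_fixed hf hs (inv f hfK hf a le_rfl (by linarith) fa)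
          (inv _ (K.inv_mem hfK) hfi a le_rfl (by linarith) (ap_inv_fix fa))
      · exact sup_fixed hg hs (inv g hgK hg c hac (by linarith) gc)
          (inv _ (K.inv_mem hgK) hgi c hac (by linarith) (ap_inv_fix gc))
    · have hpd : d ≤ p := by
        by_contra hlt
        exact hno' p hpF (not_le.mp hpa) (not_le.mp hlt)
      have hbdd : ∀ x ∈ {x | x ∈ F ∧ d ≤ x}, d ≤ x := fun x hx => hx.2
      obtain ⟨s, hs⟩ := exists_glb (S := {x | x ∈ F ∧ d ≤ x}) ⟨p, hpF, hpd⟩ hbdd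
      have hps : s ≤ p := hs.1 ⟨hpF, hpd⟩
      have hsa : d ≤ s := hs.2 hbdd
      have inv : ∀ h ∈ K, StrictMono (ap h) → ∀ t, t ≤ d → a < t → ap h t = t →
          ∀ x ∈ {x | x ∈ F ∧ d ≤ x}, ap h x ∈ {x | x ∈ F ∧ d ≤ x} := by
        rintro h hh hm t h1 h2 h3 x ⟨hx, hxa⟩
        have h4 : t ≤ ap h x := by
          have := hm.monotone (h1.trans hxa)
          rwa [h3] at this
        refine ⟨hinv h hh x hx, ?_⟩
        by_contra hlt
        exact hno' _ (hinv h hh x hx) (by linarith) (not_le.mp hlt)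
      refine hnofix s (by linarith) (by linarith) ?_ ?_
      · exact inf_fixed hf hs (inv f hfK hf b hbd (by linarith) fb)
          (inv _ (K.inv_mem hfK) hfi b hbd (by linarith) (ap_inv_fix fb))
      · exact inf_fixed hg hs (inv g hgK hg d le_rfl (by linarith) gd)
          (inv _ (K.inv_mem hgK) hgi d le_rfl (by linarith) (ap_inv_fix gd))
  -- trivial germs
  have ht1 : ⁅K, K⁆ ≤ trivGerm (𝓝[>] A) := comm_le_triv (A := A)
    (fun k hk => germ_right (hPL k (hKG hk)) (hKA k hk))
    (fun k hk => tend_right (hKm k hk) (hKA k hk))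
  have ht2 : ⁅K, K⁆ ≤ trivGerm (𝓝[<] B) := comm_le_triv (A := B)
    (fun k hk => germ_left (hPL k (hKG hk)) (hKB k hk))
    (fun k hk => tend_left (hKm k hk) (hKB k hk))
  have hall : ∀ n, ∀ x, A < x → x < B → ∃ k ∈ DD K (n + 1), ap k x ≠ x := by
    intro n
    induction n with
    | zero => exact hbase
    | succ n ih =>
      have hle : DD K (n + 1) ≤ ⁅K, K⁆ := DD_le K n
      exact step (fun k hk => hKm k (hD1K (hle hk))) hAB (fun k hk => hKB k (hD1K (hle hk)))
        (hle.trans ht1) (hle.trans ht2) ih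
  obtain ⟨n, hn⟩ := hsol.solvable
  obtain ⟨k, hk, hkx⟩ := hall n ((A + B) / 2) (by linarith) (by linarith)
  have h1 := DD_le_map K G hKG n
  rw [hn, Subgroup.map_bot] at h1
  have h2 := h1 (comm_le_self _ hk)
  rw [Subgroup.mem_bot] at h2
  exact hkx (by rw [h2, ap_one])

theorem statement5 (G : Subgroup PermR) (hPL : ∀ g ∈ G, IsPL g)
    (hbad : AdmitsBadOverlap G) : ¬ IsSolvable ↥G := by
  obtain ⟨f, hf, g, hg, a, b, c, d, hA, hB, ⟨x, hx1, hx2⟩, hne, hn1, hn2⟩ := hbad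
  have hab := hA.1
  have hcd := hB.1
  have h1 : ¬ (c < a ∧ b < d) := fun h => hn1 (Icc_subset_Ioo h.1 h.2)
  have h2 : ¬ (a < c ∧ d < b) := fun h => hn2 (Icc_subset_Ioo h.1 h.2)
  have hcb : c < b := hx2.1.trans hx1.2
  have had : a < d := hx1.1.trans hx2.2
  rcases lt_trichotomy a c with h | h | h
  · have hbd : b ≤ d := not_lt.mp fun h3 => h2 ⟨h, h3⟩
    exact main_aux G hPL hf hg hA hB (Or.inr ⟨h, hcb, hbd⟩)
  · rcases lt_trichotomy b d with h3 | h3 | h3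
    · exact main_aux G hPL hf hg hA hB (Or.inl ⟨h.le, hcb, h3⟩)
    · exact absurd (by rw [h, h3]) hne
    · exact main_aux G hPL hg hf hB hA (Or.inl ⟨h.ge, had, h3⟩)
  · have hbd : d ≤ b := not_lt.mp fun h3 => h1 ⟨h, h3⟩
    exact main_aux G hPL hg hf hB hA (Or.inr ⟨h, had, hbd⟩)

end PLPaper
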